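/- (Theorem 2, combined edge-density criterion.) Let G be a directed acyclic graph on V = 𝐗 ∪ 𝐘, unidirectional from 𝐗 to 𝐘, and assume that at least one of the following graphical conditions holds: (C1) there exist distinct Xi, Xj ∈ 𝐗 and S ⊆ 𝐗 \ {Xi, Xj} such that S d-separates Xi and Xj but S ∪ 𝐘 does not; or (C2) there exist distinct Yk, Yl ∈ 𝐘 and S ⊆ 𝐘 \ {Yk, Yl} such that S does not d-separate Yk and Yl but S ∪ 𝐗 does. Then d(𝐗|𝐘) − d(𝐘|𝐗) > 0, where d(𝐗|𝐘) := edgeDens(G_{𝐗|𝐘}) − edgeDens(G_𝐗) and d(𝐘|𝐗) := edgeDens(G_{𝐘|𝐗}) − edgeDens(G_𝐘); hence the causal direction can be inferred from the sign of d(𝐗|𝐘) − d(𝐘|𝐗). -/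

import Mathlib

open MeasureTheory ProbabilityTheory

namespace VecCI

variable {V : Type*}

/-- Undirected adjacency of the edge relation `E`. -/
def Adj (E : V → V → Prop) (u v : V) : Prop := E u v ∨ E v u

/-- `p` is a path from `a` to `b`: a list of pairwise distinct vertices, starting at `a`,
ending at `b`, with at least two vertices, consecutive vertices being adjacent. -/
def IsPath (E : V → V → Prop) (p : List V) (a b : V) : Prop :=
  p.Nodup ∧ 2 ≤ p.length ∧ p.head? = some a ∧ p.getLast? = some b ∧ p.Chain' (Adj E)

/-- Index `i` is an interior position of the path `p`. -/
def Interior (p : List V) (i : ℕ) : Prop := 0 < i ∧ i + 1 < p.length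

/-- The vertex at interior position `i` of `p` is a collider: both adjacent edges point into it. -/
def ColliderAt (E : V → V → Prop) (p : List V) (i : ℕ) : Prop :=
  Interior p i ∧
    ∃ u v w, p[i - 1]? = some u ∧ p[i]? = some v ∧ p[i + 1]? = some w ∧ E u v ∧ E w v

/-- The vertex at interior position `i` of `p` is a non-collider. -/
def NonColliderAt (E : V → V → Prop) (p : List V) (i : ℕ) : Prop :=
  Interior p i ∧ ¬ ColliderAt E p i

/-- `d` is a descendant of `c`: `d = c` or there is a directed path from `c` to `d`. -/
def Descendant (E : V → V → Prop) (c d : V) : Prop := Relation.ReflTransGen E c d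

/-- A set `S` blocks a path `p` if some interior non-collider of `p` lies in `S`, or some
collider of `p` has no descendant in `S`. -/
def Blocked (E : V → V → Prop) (S : Set V) (p : List V) : Prop :=
  (∃ i v, NonColliderAt E p i ∧ p[i]? = some v ∧ v ∈ S) ∨
  (∃ i v, ColliderAt E p i ∧ p[i]? = some v ∧ ∀ d, Descendant E v d → d ∉ S)

/-- `S` d-separates `a` and `b`: every path between them is blocked by `S`. -/
def DSep (E : V → V → Prop) (S : Set V) (a b : V) : Prop :=
  ∀ p : List V, IsPath E p a b → Blocked E S p

/-- `E` admits no directed cycle. -/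
def Acyclic (E : V → V → Prop) : Prop := ∀ v, ¬ Relation.TransGen E v v

/-- `E` has no edge from `Ys` to `Xs`. -/
def Unidirectional (E : V → V → Prop) (Xs Ys : Set V) : Prop :=
  ∀ x ∈ Xs, ∀ y ∈ Ys, ¬ E y x


/-- The skeleton produced by an oracle PC algorithm run on the group `W`: the unordered
pair `{i, j}` of distinct vertices of `W` is an edge iff no `S ⊆ W \ {i, j}` d-separates
`i` and `j` in the full graph. -/
def EdgePlain (E : V → V → Prop) (W : Set V) : Set (Sym2 V) :=
  {e | ∃ i j : V, e = s(i, j) ∧ i ∈ W ∧ j ∈ W ∧ i ≠ j ∧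
    ∀ S : Set V, S ⊆ W \ {i, j} → ¬ DSep E S i j}

/-- The skeleton produced by an oracle PC algorithm run on the group `W` with the other
group `C` added to every conditioning set: `{i, j}` is an edge iff there is no
`S ⊆ W \ {i, j}` such that `S ∪ C` d-separates `i` and `j` in the full graph. -/
def EdgeCond (E : V → V → Prop) (W C : Set V) : Set (Sym2 V) :=
  {e | ∃ i j : V, e = s(i, j) ∧ i ∈ W ∧ j ∈ W ∧ i ≠ j ∧
    ∀ S : Set V, S ⊆ W \ {i, j} → ¬ DSep E (S ∪ C) i j}

/-- Edge density of an edge set `A` over a vertex group `W` with `n = |W|`: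
`|A| / (n (n − 1) / 2)`. -/
noncomputable def edgeDens (A : Set (Sym2 V)) (W : Set V) : ℝ :=
  (A.ncard : ℝ) / ((W.ncard : ℝ) * ((W.ncard : ℝ) - 1) / 2)


/-!
Among the vertices of `X`, and among those of `Y` given `X`, the separation tests recover exactly
the edges of `E`, because the parents of a vertex are available for conditioning. Hence the
`X`-density can only grow when `Y` is conditioned on, the `Y`-density can only drop when `X` is, and
it suffices to show that (C1) forces a spurious edge of `EdgeCond E X Y` and (C2) one of
`EdgePlain E Y`. Both are proved by contraposition with the moralization criterion: `S` separates
`a` and `b` iff `S` separates them in the moral graph of the ancestors of `{a, b} ∪ S`.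

* (C1) If `EdgeCond E X Y` has no spurious edge, then parents in `X` of a common ancestor of `Y` are
  adjacent. Moralizing the ancestors added by `Y` thus creates no edge in `X`, and a connection that
  uses these ancestors can be pulled back.
* (C2) If `EdgePlain E Y` has no spurious edge, then vertices of `Y` that are joined by an inducing
  path through `X` are adjacent. A connection can then be shortcut past each of its excursions into
  `X`, hence survives conditioning on `X`.
-/

section

open Relation

variable {E : V → V → Prop} {A B S T : Set V} {a b c u v w : V}

lemma Adj.symm (h : Adj E u v) : Adj E v u := Or.symm h

lemma Acyclic.asymm (hE : Acyclic E) (h : E u v) : ¬ E v u :=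
  fun h' => hE u (.tail (.single h) h')

lemma Acyclic.not_reflTransGen (hE : Acyclic E) (h : E u v) : ¬ ReflTransGen E v u :=
  fun h' => hE u (.head' h h')

/-- Sets of vertices closed under taking parents. -/
def Ancestral (E : V → V → Prop) (B : Set V) : Prop := ∀ ⦃u v⦄, E u v → v ∈ B → u ∈ B

/-- The vertices of `T` together with all their ancestors, written `An(T)` in the literature. -/
def ancestors (E : V → V → Prop) (T : Set V) : Set V := {v | ∃ t ∈ T, ReflTransGen E v t}

lemma Ancestral.mem_of_reflTransGen (hB : Ancestral E B) (h : ReflTransGen E u v) (hv : v ∈ B) :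
    u ∈ B := by
  induction h using ReflTransGen.head_induction_on with
  | refl => exact hv
  | head huw _ hw => exact hB huw hw

lemma Ancestral.mem_of_reflGen (hB : Ancestral E B) (h : ReflGen E u v) (hv : v ∈ B) : u ∈ B :=
  hB.mem_of_reflTransGen h.to_reflTransGen hv

lemma subset_ancestors : T ⊆ ancestors E T := fun v hv => ⟨v, hv, .refl⟩

lemma ancestral_ancestors : Ancestral E (ancestors E T) :=
  fun _ _ huv ⟨t, ht, hvt⟩ => ⟨t, ht, .head huv hvt⟩

lemma Ancestral.ancestors_subset (hB : Ancestral E B) (h : T ⊆ B) : ancestors E T ⊆ B :=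
  fun _ ⟨_, ht, hvt⟩ => hB.mem_of_reflTransGen hvt (h ht)

lemma ancestors_mono (h : S ⊆ T) : ancestors E S ⊆ ancestors E T :=
  ancestral_ancestors.ancestors_subset (h.trans subset_ancestors)

/-- Adjacency in the moral graph of `E` restricted to `B` and with `S` deleted. Two vertices are
adjacent when both lie in a family `{c} ∪ parents c` with `c ∈ B`; this puts the edges of `E` and
the marriages of parents on the same footing, at the price of making the relation reflexive. -/
def MoralAdj (E : V → V → Prop) (B S : Set V) (u v : V) : Prop :=
  u ∉ S ∧ v ∉ S ∧ ∃ c ∈ B, ReflGen E u c ∧ ReflGen E v c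

/-- `a` and `b` are connected outside `S` in the moral graph of the ancestors of
`{a, b} ∪ S`. -/
def MoralConn (E : V → V → Prop) (S : Set V) (a b : V) : Prop :=
  ReflTransGen (MoralAdj E (ancestors E ({a, b} ∪ S)) S) a b

lemma MoralAdj.mono (hAB : A ⊆ B) (h : MoralAdj E A S u v) : MoralAdj E B S u v :=
  h.imp_right (And.imp_right fun ⟨c, hc, hfamily⟩ => ⟨c, hAB hc, hfamily⟩)

instance : Std.Symm (MoralAdj E B S) where
  symm _ _ := fun ⟨hu, hv, c, hc, huc, hvc⟩ => ⟨hv, hu, c, hc, hvc, huc⟩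

lemma MoralAdj.reflTransGen_symm (h : ReflTransGen (MoralAdj E B S) u v) :
    ReflTransGen (MoralAdj E B S) v u :=
  symm_of _ h

lemma MoralAdj.of_adj (hu : u ∉ S) (hv : v ∉ S) (huB : u ∈ B) (hvB : v ∈ B) (h : Adj E u v) :
    MoralAdj E B S u v :=
  h.elim (fun huv => ⟨hu, hv, v, hvB, .single huv, .refl⟩)
    (fun hvu => ⟨hu, hv, u, huB, .refl, .single hvu⟩)

lemma MoralConn.symm (h : MoralConn E S a b) : MoralConn E S b a := by
  rw [MoralConn, Set.pair_comm]
  exact MoralAdj.reflTransGen_symm h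

/-- The triple of consecutive vertices `u, v, w` of a path does not block it at `v`, given `S`. -/
def OpenTriple (E : V → V → Prop) (S : Set V) (u v w : V) : Prop :=
  (E u v ∧ E w v → v ∈ ancestors E S) ∧ (v ∈ S → E u v ∧ E w v)

/-- A sequence of consecutively adjacent vertices, possibly with repetitions, that `S` does not
block. -/
def Active (E : V → V → Prop) (S : Set V) (p : List V) : Prop :=
  p.IsChain (Adj E) ∧ ¬ Blocked E S p

lemma not_blocked_iff {p : List V} : ¬ Blocked E S p ↔ ∀ i v, Interior p i → p[i]? = some v →
    (ColliderAt E p i → v ∈ ancestors E S) ∧ (v ∈ S → ColliderAt E p i) := by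
  simp only [Blocked, NonColliderAt, ancestors, Descendant, Set.mem_ofPred_eq, not_or, not_exists,
    not_and]
  constructor
  · rintro ⟨hnoncollider, hcollider⟩ i v hi hv
    refine ⟨fun hc => ?_, fun hvS => by_contra fun hc => hnoncollider i v ⟨hi, hc⟩ hv hvS⟩
    simpa [and_comm] using hcollider i v hc hv
  · refine fun h => ⟨fun i v hi hv hvS => hi.2 ((h i v hi.1 hv).2 hvS), fun i v hc hv hd => ?_⟩
    obtain ⟨t, ht, hvt⟩ := (h i v hc.1 hv).1 hc
    exact hd t hvt ht

lemma not_blocked_of_length_le_two {p : List V} (h : p.length ≤ 2) : ¬ Blocked E S p :=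
  not_blocked_iff.2 fun i _ ⟨_, _⟩ => by omega

lemma not_blocked_cons_cons_cons {l : List V} : ¬ Blocked E S (u :: v :: w :: l) ↔
    OpenTriple E S u v w ∧ ¬ Blocked E S (v :: w :: l) := by
  have collider_one : ColliderAt E (u :: v :: w :: l) 1 ↔ E u v ∧ E w v := by
    simp [ColliderAt, Interior]
  have collider_shift (i : ℕ) :
      ColliderAt E (u :: v :: w :: l) (i + 2) ↔ ColliderAt E (v :: w :: l) (i + 1) := by
    simp [ColliderAt, Interior]
  simp only [not_blocked_iff, OpenTriple]
  constructor
  · refine fun h => ⟨by simpa [collider_one, Interior] using h 1 v, fun i x hi hx => ?_⟩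
    obtain ⟨i, rfl⟩ := Nat.exists_eq_succ_of_ne_zero hi.1.ne'
    rw [← collider_shift]
    exact h (i + 2) x (by simpa [Interior] using hi) (by simpa using hx)
  · rintro ⟨hone, h⟩ (_ | _ | i) x hi hx
    · exact absurd hi.1 (lt_irrefl 0)
    · obtain rfl : v = x := by simpa using hx
      simpa [collider_one] using hone
    · rw [collider_shift]
      exact h (i + 1) x (by simpa [Interior] using hi) (by simpa using hx)

lemma active_singleton : Active E S [u] :=
  ⟨.singleton u, not_blocked_of_length_le_two (by simp)⟩

lemma active_pair : Active E S [u, v] ↔ Adj E u v := by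
  simp [Active, not_blocked_of_length_le_two]

lemma active_cons_cons_cons {l : List V} : Active E S (u :: v :: w :: l) ↔
    Adj E u v ∧ OpenTriple E S u v w ∧ Active E S (v :: w :: l) := by
  rw [Active, Active, List.isChain_cons_cons, not_blocked_cons_cons_cons]
  tauto

lemma Active.adj {l : List V} (h : Active E S (u :: v :: l)) : Adj E u v := h.1.rel

lemma Active.tail {l : List V} (h : Active E S (u :: v :: l)) : Active E S (v :: l) := by
  cases l with
  | nil => exact active_singleton
  | cons w l => exact (active_cons_cons_cons.1 h).2.2

lemma Active.suffix {l l' : List V} (h : Active E S (u :: l)) (hl : v :: l' <:+ u :: l) :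
    Active E S (v :: l') := by
  induction l generalizing u with
  | nil =>
    obtain ⟨rfl, rfl⟩ : v = u ∧ l' = [] := by simpa [List.suffix_cons_iff] using hl
    exact h
  | cons w l ih =>
    rcases List.suffix_cons_iff.1 hl with heq | hl
    · exact heq ▸ h
    · exact ih h.tail hl

lemma Active.cons {l : List V} (h : Active E S (v :: l)) (hwv : Adj E w v)
    (hopen : ∀ u l', l = u :: l' → OpenTriple E S w v u) : Active E S (w :: v :: l) := by
  cases l with
  | nil => exact active_pair.2 hwv
  | cons u l => exact active_cons_cons_cons.2 ⟨hwv, hopen u l rfl, h⟩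

lemma Active.mem_of_edge (hB : Ancestral E B) (hS : S ⊆ B) (hb : b ∈ B)
    {l : List V} (h : Active E S (u :: v :: l)) (hlast : (v :: l).getLast? = some b)
    (huv : E u v) : v ∈ B := by
  induction l generalizing u v with
  | nil =>
    obtain rfl : v = b := by simpa using hlast
    exact hb
  | cons w l ih =>
    obtain ⟨-, hopen, htail⟩ := active_cons_cons_cons.1 h
    by_cases hwv : E w v
    · exact hB.ancestors_subset hS (hopen.1 ⟨huv, hwv⟩)
    · have hvw : E v w := htail.adj.resolve_right hwv
      exact hB hvw (ih htail (by simpa using hlast) hvw)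

lemma Active.notMem_of_edge (hE : Acyclic E) (hb : b ∉ S) {l : List V}
    (h : Active E S (u :: v :: l)) (hlast : (v :: l).getLast? = some b) (hvu : E v u) :
    v ∉ S := by
  cases l with
  | nil =>
    obtain rfl : v = b := by simpa using hlast
    exact hb
  | cons w l =>
    intro hv
    exact hE.asymm hvu ((active_cons_cons_cons.1 h).2.1.2 hv).1

/- A collider on the path is bypassed by marrying its two neighbours. -/
lemma Active.reflTransGen_moralAdj (hE : Acyclic E) (hB : Ancestral E B) (hS : S ⊆ B)
    (hbB : b ∈ B) (hbS : b ∉ S) : ∀ {u : V} {l : List V}, Active E S (u :: l) →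
      (u :: l).getLast? = some b → u ∈ B → u ∉ S → ReflTransGen (MoralAdj E B S) u b
  | u, [], _, hlast, _, _ => by
    obtain rfl : u = b := by simpa using hlast
    exact .refl
  | u, [v], h, hlast, huB, huS => by
    obtain rfl : v = b := by simpa using hlast
    exact .single (.of_adj huS hbS huB hbB h.adj)
  | u, v :: w :: l, h, hlast, huB, huS => by
    rw [List.getLast?_cons_cons] at hlast
    obtain ⟨huv, hopen, htail⟩ := active_cons_cons_cons.1 h
    have hvB : v ∈ B := huv.elim (h.mem_of_edge hB hS hbB hlast) (fun hvu => hB hvu huB)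
    by_cases hvS : v ∈ S
    · obtain ⟨huv, hwv⟩ := hopen.2 hvS
      have hwS : w ∉ S := htail.notMem_of_edge hE hbS (by simpa using hlast) hwv
      exact .head ⟨huS, hwS, v, hvB, .single huv, .single hwv⟩
        (htail.tail.reflTransGen_moralAdj hE hB hS hbB hbS (by simpa using hlast) (hB hwv hvB) hwS)
    · exact .head (.of_adj huS hvS huB hvB huv)
        (htail.reflTransGen_moralAdj hE hB hS hbB hbS hlast hvB hvS)

/-- `BayesBall E S a v d`: some walk from `a` to `v`, possibly with repeated vertices, is not
blocked by `S`. The flag `d` records how the walk arrives at `v`: `false` along an arrow into `v`,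
`true` against an arrow out of `v`, or at the start `v = a`. -/
inductive BayesBall (E : V → V → Prop) (S : Set V) (a : V) : V → Bool → Prop
  | start : BayesBall E S a a true
  | down {v w : V} {d : Bool} : BayesBall E S a v d → v ∉ S → E v w → BayesBall E S a w false
  | up {v w : V} : BayesBall E S a v true → v ∉ S → E w v → BayesBall E S a w true
  | bounce {v w : V} :
      BayesBall E S a v false → v ∈ ancestors E S → E w v → BayesBall E S a w true

lemma BayesBall.descend (h : BayesBall E S a v false) (hv : v ∉ ancestors E S)
    (hvw : ReflTransGen E v w) : BayesBall E S a w false := by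
  induction hvw with
  | refl => exact h
  | tail hvu huw ih => exact ih.down (fun huS => hv ⟨_, huS, hvu⟩) huw

lemma BayesBall.of_ancestor (hv : v ∉ ancestors E S) (hva : ReflTransGen E v a) :
    BayesBall E S a v true := by
  induction hva using ReflTransGen.head_induction_on with
  | refl => exact .start
  | head hvw _ ih =>
    have hw := fun hw => hv (ancestral_ancestors hvw hw)
    exact (ih hw).up (fun hwS => hw (subset_ancestors hwS)) hvw

/- A collider that is no ancestor of `S` is an ancestor of `a` or of `b`. In the first case the walk
is rerouted from `a` up to the collider, in the second case it descends to `b`. -/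
lemma BayesBall.up_or_reach (h : BayesBall E S a v false) (hv : v ∈ ancestors E ({a, b} ∪ S))
    (hwv : E w v) : BayesBall E S a w true ∨ ∃ d, BayesBall E S a b d := by
  by_cases hvS : v ∈ ancestors E S
  · exact .inl (h.bounce hvS hwv)
  · obtain ⟨t, (rfl | rfl) | ht, hvt⟩ := hv
    · exact .inl ((of_ancestor hvS hvt).up (fun h => hvS (subset_ancestors h)) hwv)
    · exact .inr ⟨_, h.descend hvS hvt⟩
    · exact (hvS ⟨t, ht, hvt⟩).elim

lemma BayesBall.moralAdj {d : Bool} (h : BayesBall E S a v d)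
    (hvw : MoralAdj E (ancestors E ({a, b} ∪ S)) S v w) :
    (∃ d, BayesBall E S a w d) ∨ ∃ d, BayesBall E S a b d := by
  obtain ⟨hvS, -, c, hc, hvc, hwc⟩ := hvw
  obtain ⟨d', hcS, hball⟩ : ∃ d', (d' = true → c ∉ S) ∧ BayesBall E S a c d' := by
    cases hvc with
    | refl => exact ⟨d, fun _ => hvS, h⟩
    | single hvc => exact ⟨false, by simp, h.down hvS hvc⟩
  cases hwc with
  | refl => exact .inl ⟨d', hball⟩
  | single hwc =>
    cases d' with
    | true => exact .inl ⟨true, hball.up (hcS rfl) hwc⟩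
    | false => exact (hball.up_or_reach hc hwc).imp_left fun hw => ⟨true, hw⟩

lemma MoralConn.bayesBall (h : MoralConn E S a b) : ∃ d, BayesBall E S a b d := by
  suffices ∀ v, ReflTransGen (MoralAdj E (ancestors E ({a, b} ∪ S)) S) a v →
      (∃ d, BayesBall E S a v d) ∨ ∃ d, BayesBall E S a b d from (this b h).elim id id
  intro v hv
  induction hv with
  | refl => exact .inl ⟨true, .start⟩
  | tail _ huv ih => exact ih.elim (fun ⟨_, hball⟩ => hball.moralAdj huv) .inr

/-- `v` is joined to `a` by an active sequence of distinct vertices, listed from `v`, that a walk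
continuing from `v` may use in place of a `BayesBall` walk arriving with flag `d`: the last two
clauses guarantee that each continuation allowed to the latter leaves `v` unblocked. -/
def ActivePathTo (E : V → V → Prop) (S : Set V) (a v : V) (d : Bool) : Prop :=
  ∃ l : List V, (v :: l).Nodup ∧ (v :: l).getLast? = some a ∧ Active E S (v :: l) ∧
    ∀ u l', l = u :: l' →
      (d = true → E u v → v ∈ ancestors E S) ∧ (d = false → v ∈ S → E u v)

lemma Active.edge_of_mem {l l' : List V} (h : Active E S (u :: l)) (hl : v :: w :: l' <:+ l)
    (hv : v ∈ S) : E w v := by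
  induction l generalizing u with
  | nil => simp at hl
  | cons x l ih =>
    rcases List.suffix_cons_iff.1 hl with heq | hl
    · obtain ⟨rfl, rfl⟩ := List.cons.inj heq
      exact ((active_cons_cons_cons.1 h).2.1.2 hv).2
    · exact ih h.tail hl

/- Read from `v` towards `u`, the sequence starts along an arrow, so it either stays directed or
first turns around at a collider, which is a descendant of `v` and an ancestor of `S`. -/
lemma Active.mem_ancestors_or_directed {x : V} {l l' : List V} (h : Active E S (u :: x :: l))
    (hl : v :: w :: l' <:+ x :: l) (hwv : E w v) :
    v ∈ ancestors E S ∨ E x u ∧ ReflTransGen E v x := by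
  induction l generalizing u x with
  | nil => simp [List.suffix_cons_iff] at hl
  | cons y l ih =>
    obtain ⟨hux, hopen, htail⟩ := active_cons_cons_cons.1 h
    have hdirected : v ∈ ancestors E S ∨ E y x ∧ ReflTransGen E v x := by
      rcases List.suffix_cons_iff.1 hl with heq | hl
      · simp only [List.cons.injEq] at heq
        obtain ⟨rfl, rfl, -⟩ := heq
        exact .inr ⟨hwv, .refl⟩
      · exact (ih htail hl).imp_right fun ⟨hyx, hvy⟩ => ⟨hyx, hvy.tail hyx⟩
    rcases hdirected with hvS | ⟨hyx, hvx⟩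
    · exact .inl hvS
    · rcases hux with hux | hxu
      · exact .inl (ancestral_ancestors.mem_of_reflTransGen hvx (hopen.1 ⟨hux, hyx⟩))
      · exact .inr ⟨hxu, hvx⟩

lemma ActivePathTo.of_mem {d : Bool} {l : List V} (hnodup : (v :: l).Nodup)
    (hlast : (v :: l).getLast? = some a) (h : Active E S (v :: l)) (hw : w ∈ l)
    (hopen : ∀ u l', l = u :: l' → OpenTriple E S w v u) (hd : d = true → E w v) :
    ActivePathTo E S a w d := by
  obtain ⟨l₁, l₂, hl⟩ := List.append_of_mem hw
  have hsuffix : w :: l₂ <:+ l := ⟨l₁, hl.symm⟩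
  have hsuffix' : w :: l₂ <:+ v :: l := hsuffix.trans (List.suffix_cons _ _)
  refine ⟨l₂, hnodup.sublist hsuffix'.sublist, ?_, h.suffix hsuffix', ?_⟩
  · rwa [hl, ← List.cons_append, List.getLast?_append_of_ne_nil _ (by simp)] at hlast
  · rintro u l' rfl
    refine ⟨fun hd' huw => ?_, fun _ hwS => h.edge_of_mem hsuffix hwS⟩
    obtain ⟨x, l, rfl⟩ := List.exists_cons_of_ne_nil (List.ne_nil_of_mem hw)
    rcases h.mem_ancestors_or_directed hsuffix huw with hwS | ⟨hxv, -⟩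
    · exact hwS
    · exact ancestral_ancestors (hd hd') ((hopen x l rfl).1 ⟨hd hd', hxv⟩)

lemma ActivePathTo.of_openTriple (hE : Acyclic E) {d : Bool} {l : List V}
    (hnodup : (v :: l).Nodup) (hlast : (v :: l).getLast? = some a) (h : Active E S (v :: l))
    (hopen : ∀ u l', l = u :: l' → OpenTriple E S w v u)
    (htrue : d = true → E w v) (hfalse : d = false → E v w) : ActivePathTo E S a w d := by
  by_cases hw : w ∈ l
  · exact .of_mem hnodup hlast h hw hopen htrue
  · have hadj : Adj E w v := by cases d with
      | true => exact .inl (htrue rfl)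
      | false => exact .inr (hfalse rfl)
    have hne : w ≠ v := by
      rintro rfl
      exact hE w (.single (hadj.elim id id))
    refine ⟨v :: l, List.nodup_cons.2 ⟨by simp [hne, hw], hnodup⟩, by simpa using hlast,
      h.cons hadj hopen, ?_⟩
    rintro u l' ⟨⟩
    exact ⟨fun hd hvw => (hE.asymm hvw (htrue hd)).elim, fun hd _ => hfalse hd⟩

lemma BayesBall.activePathTo (hE : Acyclic E) {d : Bool} (h : BayesBall E S a v d) :
    ActivePathTo E S a v d := by
  induction h with
  | start => exact ⟨[], by simp, rfl, active_singleton, by simp⟩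
  | down _ hvS hvw ih =>
    obtain ⟨l, hnodup, hlast, hactive, -⟩ := ih
    exact .of_openTriple hE hnodup hlast hactive
      (fun u l' _ => ⟨fun hwv => (hE.asymm hvw hwv.1).elim, fun h => (hvS h).elim⟩)
      (by simp) (fun _ => hvw)
  | up _ hvS hwv ih =>
    obtain ⟨l, hnodup, hlast, hactive, hflag⟩ := ih
    exact .of_openTriple hE hnodup hlast hactive
      (fun u l' hl => ⟨fun huv => (hflag u l' hl).1 rfl huv.2, fun h => (hvS h).elim⟩)
      (fun _ => hwv) (by simp)
  | bounce _ hv hwv ih =>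
    obtain ⟨l, hnodup, hlast, hactive, hflag⟩ := ih
    exact .of_openTriple hE hnodup hlast hactive
      (fun u l' hl => ⟨fun _ => hv, fun hvS => ⟨hwv, (hflag u l' hl).2 rfl hvS⟩⟩)
      (fun _ => hwv) (by simp)

theorem not_dSep_iff_moralConn (hE : Acyclic E) (hab : a ≠ b) (ha : a ∉ S) (hb : b ∉ S) :
    ¬ DSep E S a b ↔ MoralConn E S a b := by
  simp only [DSep, not_forall]
  constructor
  · rintro ⟨p, ⟨-, -, hhead, hlast, hchain⟩, hblocked⟩
    obtain ⟨l, rfl⟩ := List.head?_eq_some_iff.1 hhead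
    exact Active.reflTransGen_moralAdj hE ancestral_ancestors
      (Set.subset_union_right.trans subset_ancestors) (subset_ancestors (by simp)) hb
      ⟨hchain, hblocked⟩ hlast (subset_ancestors (by simp)) ha
  · intro h
    obtain ⟨d, hball⟩ := h.symm.bayesBall
    obtain ⟨l, hnodup, hlast, ⟨hchain, hblocked⟩, -⟩ := hball.activePathTo hE
    cases l with
    | nil => exact absurd (by simpa using hlast) hab
    | cons u l => exact ⟨a :: u :: l, ⟨hnodup, by simp, rfl, hlast, hchain⟩, hblocked⟩

/- The local Markov property of directed acyclic graphs. -/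
lemma not_moralConn_of_parents_subset (hE : Acyclic E) (hpa : {u | E u b} ⊆ T)
    (hT : ∀ t ∈ T, ¬ ReflTransGen E b t) (hba : ¬ ReflTransGen E b a) : ¬ MoralConn E T a b := by
  have hisolated (v : V) (hv : MoralAdj E (ancestors E ({a, b} ∪ T)) T b v) : v = b := by
    obtain ⟨-, hvT, c, ⟨t, ht, hct⟩, hbc, hvc⟩ := hv
    cases hbc with
    | refl =>
      cases hvc with
      | refl => rfl
      | single hvb => exact (hvT (hpa hvb)).elim
    | single hbc =>
      rcases ht with (rfl | rfl) | ht
      · exact (hba (.head hbc hct)).elim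
      · exact (hE.not_reflTransGen hbc hct).elim
      · exact (hT t ht (.head hbc hct)).elim
  have hreach (v : V) (hv : ReflTransGen (MoralAdj E (ancestors E ({a, b} ∪ T)) T) b v) :
      v = b := by
    induction hv with
    | refl => rfl
    | tail _ huv ih => exact hisolated _ (ih ▸ huv)
  intro h
  exact hba (hreach a (MoralAdj.reflTransGen_symm h) ▸ .refl)

/-- The edges of the skeleton of `E` with both ends in `W`. -/
def adjEdges (E : V → V → Prop) (W : Set V) : Set (Sym2 V) :=
  {e | ∃ i j : V, e = s(i, j) ∧ i ∈ W ∧ j ∈ W ∧ i ≠ j ∧ Adj E i j}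

lemma adj_of_mk_mem_adjEdges {W : Set V} (h : s(a, b) ∈ adjEdges E W) : Adj E a b := by
  obtain ⟨i, j, heq, -, -, -, hadj⟩ := h
  rcases Sym2.eq_iff.1 heq with ⟨rfl, rfl⟩ | ⟨rfl, rfl⟩
  · exact hadj
  · exact hadj.symm

lemma edgeCond_empty (W : Set V) : EdgeCond E W ∅ = EdgePlain E W := by
  simp only [EdgeCond, EdgePlain, Set.union_empty]

lemma notMem_union_of_subset_sdiff {W C : Set V} (hWC : Disjoint W C) (ha : a ∈ W) (hb : b ∈ W)
    (hS : S ⊆ W \ {a, b}) : a ∉ S ∪ C ∧ b ∉ S ∪ C :=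
  ⟨fun h => h.elim (fun h => (hS h).2 (by simp)) (hWC.notMem_of_mem_left ha),
    fun h => h.elim (fun h => (hS h).2 (by simp)) (hWC.notMem_of_mem_left hb)⟩

lemma not_dSep_union_iff_moralConn {W C : Set V} (hE : Acyclic E) (hWC : Disjoint W C) (ha : a ∈ W)
    (hb : b ∈ W) (hab : a ≠ b) (hS : S ⊆ W \ {a, b}) :
    ¬ DSep E (S ∪ C) a b ↔ MoralConn E (S ∪ C) a b :=
  have ⟨haS, hbS⟩ := notMem_union_of_subset_sdiff hWC ha hb hS
  not_dSep_iff_moralConn hE hab haS hbS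

lemma mk_mem_edgeCond_iff {W C : Set V} (hE : Acyclic E) (hWC : Disjoint W C) (ha : a ∈ W)
    (hb : b ∈ W) (hab : a ≠ b) :
    s(a, b) ∈ EdgeCond E W C ↔ ∀ S ⊆ W \ {a, b}, MoralConn E (S ∪ C) a b := by
  constructor
  · rintro ⟨i, j, heq, -, -, -, hsep⟩ S hS
    rcases Sym2.eq_iff.1 heq with ⟨rfl, rfl⟩ | ⟨rfl, rfl⟩
    · exact (not_dSep_union_iff_moralConn hE hWC ha hb hab hS).1 (hsep S hS)
    · rw [Set.pair_comm] at hS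
      exact ((not_dSep_union_iff_moralConn hE hWC hb ha hab.symm hS).1 (hsep S hS)).symm
  · exact fun h => ⟨a, b, rfl, ha, hb, hab,
      fun S hS => (not_dSep_union_iff_moralConn hE hWC ha hb hab hS).2 (h S hS)⟩

lemma mk_mem_edgePlain_iff {W : Set V} (hE : Acyclic E) (ha : a ∈ W) (hb : b ∈ W)
    (hab : a ≠ b) :
    s(a, b) ∈ EdgePlain E W ↔ ∀ S ⊆ W \ {a, b}, MoralConn E S a b := by
  simpa only [edgeCond_empty, Set.union_empty] using
    mk_mem_edgeCond_iff hE (Set.disjoint_empty W) ha hb hab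

lemma not_dSep_of_adj (hab : a ≠ b) (h : Adj E a b) : ¬ DSep E S a b := fun hsep =>
  have hactive : Active E S [a, b] := active_pair.2 h
  hactive.2 (hsep [a, b] ⟨by simp [hab], le_rfl, rfl, rfl, hactive.1⟩)

lemma adjEdges_subset_edgeCond {W C : Set V} : adjEdges E W ⊆ EdgeCond E W C := by
  rintro _ ⟨i, j, rfl, hi, hj, hij, hadj⟩
  exact ⟨i, j, rfl, hi, hj, hij, fun _ _ => not_dSep_of_adj hij hadj⟩

lemma adjEdges_subset_edgePlain {W : Set V} : adjEdges E W ⊆ EdgePlain E W :=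
  edgeCond_empty (E := E) W ▸ adjEdges_subset_edgeCond

lemma edgeCond_subset_adjEdges {W C : Set V} (hE : Acyclic E) (hWC : Disjoint W C)
    (hpa : ∀ j ∈ W, ∀ u, E u j → u ∈ W ∪ C) (hdesc : ∀ j ∈ W, ∀ c ∈ C, ¬ ReflTransGen E j c) :
    EdgeCond E W C ⊆ adjEdges E W := by
  intro e he
  obtain ⟨i, j, rfl, hi, hj, hij, -⟩ := id he
  wlog hji : ¬ ReflTransGen E j i generalizing i j
  · have hij' : ¬ ReflTransGen E i j := fun hij' => by
      rcases hij'.cases_head with heq | ⟨k, hik, hkj⟩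
      · exact hij heq
      · exact hE.not_reflTransGen hik (hkj.trans (not_not.1 hji))
    rw [Sym2.eq_swap] at he ⊢
    exact this j i he hj hi hij.symm hij'
  by_contra hadj
  have hnotAdj : ¬ Adj E i j := fun h => hadj ⟨i, j, rfl, hi, hj, hij, h⟩
  refine not_moralConn_of_parents_subset hE (T := {u ∈ W | E u j} ∪ C) ?_ ?_ hji
    ((mk_mem_edgeCond_iff hE hWC hi hj hij).1 he _ ?_)
  · exact fun u huj => (hpa j hj u huj).imp_left fun hu => ⟨hu, huj⟩
  · rintro t (⟨-, htj⟩ | htC)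
    · exact hE.not_reflTransGen htj
    · exact hdesc j hj t htC
  · rintro u ⟨hu, huj⟩
    refine ⟨hu, ?_⟩
    rintro (rfl | rfl)
    · exact hnotAdj (.inl huj)
    · exact hE.asymm huj huj

lemma Ancestral.edgePlain_eq {X : Set V} (hX : Ancestral E X) (hE : Acyclic E) :
    EdgePlain E X = adjEdges E X := by
  exact (edgeCond_empty (E := E) X ▸ edgeCond_subset_adjEdges hE (Set.disjoint_empty X)
    (fun _ hj _ huj => .inl (hX huj hj)) (by simp)).antisymm adjEdges_subset_edgePlain

lemma Ancestral.edgeCond_compl_eq {X : Set V} (hX : Ancestral E X) (hE : Acyclic E) :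
    EdgeCond E Xᶜ X = adjEdges E Xᶜ :=
  (edgeCond_subset_adjEdges hE disjoint_compl_left (by simp)
    (fun _ hj _ hc hjc => hj (hX.mem_of_reflTransGen hjc hc))).antisymm
    adjEdges_subset_edgeCond

lemma MoralAdj.mem_right (hB : Ancestral E B) (h : MoralAdj E B S u v) : v ∈ B := by
  obtain ⟨-, -, c, hc, -, hvc⟩ := h
  exact hB.mem_of_reflGen hvc hc

lemma MoralAdj.mem_of_reflTransGen (hB : Ancestral E B) (ha : a ∈ B)
    (h : ReflTransGen (MoralAdj E B S) a v) : v ∈ B := by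
  cases h with
  | refl => exact ha
  | tail _ huv => exact huv.mem_right hB

/-- `v` is reached from `a` by a walk in the moral graph of `A` with `S` deleted, followed by a
directed walk in `E` with `T` deleted. -/
def MoralThenDirected (E : V → V → Prop) (A S T : Set V) (a v : V) : Prop :=
  ∃ u, ReflTransGen (MoralAdj E A S) a u ∧ ReflTransGen (fun x y => E x y ∧ x ∉ T ∧ y ∉ T) u v

lemma MoralThenDirected.tail (h : MoralThenDirected E A S T a v) (hv : v ∉ T) (hw : w ∉ T)
    (hvw : E v w) : MoralThenDirected E A S T a w :=
  h.imp fun _ ⟨hmoral, hdir⟩ => ⟨hmoral, hdir.tail ⟨hvw, hv, hw⟩⟩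

lemma MoralThenDirected.moral (hA : Ancestral E A) (hST : S ⊆ T)
    (h : MoralThenDirected E A S T a v) (hv : v ∈ A) : ReflTransGen (MoralAdj E A S) a v := by
  obtain ⟨u, hmoral, hdir⟩ := h
  induction hdir with
  | refl => exact hmoral
  | tail _ hxy ih =>
    obtain ⟨hxy, hx, hy⟩ := hxy
    exact (ih (hA hxy hv)).tail (.of_adj (fun h => hx (hST h)) (fun h => hy (hST h))
      (hA hxy hv) hv (.inl hxy))

lemma MoralThenDirected.of_mem (hA : Ancestral E A) (hST : S ⊆ T)
    (h : MoralThenDirected E A S T a v) (hc : c ∈ A) (hv : v ∉ T) (hw : w ∉ T)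
    (hvc : ReflGen E v c) (hwc : ReflGen E w c) : MoralThenDirected E A S T a w :=
  ⟨w, (h.moral hA hST (hA.mem_of_reflGen hvc hc)).tail
    ⟨fun h => hv (hST h), fun h => hw (hST h), c, hc, hvc, hwc⟩, .refl⟩

/- The walk enters `v` through another parent of `v`, which is adjacent to `w`. If the edge joining
them points away from `w`, repeat the argument at that parent. -/
lemma MoralThenDirected.parent (hA : Ancestral E A) (hB : Ancestral E B) (hST : S ⊆ T)
    (hmarried : ∀ c ∈ B \ A, ∀ x ∉ T, ∀ y ∉ T, E x c → E y c → x = y ∨ Adj E x y) (ha : a ∈ A)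
    (h : MoralThenDirected E A S T a v) (hvB : v ∈ B) (hv : v ∉ T) (hw : w ∉ T) (hwv : E w v) :
    MoralThenDirected E A S T a w := by
  obtain ⟨u, hmoral, hdir⟩ := h
  induction hdir with
  | refl =>
    exact .of_mem hA hST ⟨u, hmoral, .refl⟩ (MoralAdj.mem_of_reflTransGen hA ha hmoral) hv hw
      .refl (.single hwv)
  | @tail x v hux hxv ih =>
    by_cases hvA : v ∈ A
    · exact .of_mem hA hST ⟨u, hmoral, hux.tail hxv⟩ hvA hv hw .refl (.single hwv)
    · obtain ⟨hxv, hx, -⟩ := hxv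
      rcases hmarried v ⟨hvB, hvA⟩ x hx w hw hxv hwv with rfl | hxw | hwx
      · exact ⟨u, hmoral, hux⟩
      · exact .tail ⟨u, hmoral, hux⟩ hx hw hxw
      · exact ih (hB hxv hvB) hx hwx

lemma MoralThenDirected.moralAdj (hA : Ancestral E A) (hB : Ancestral E B) (hST : S ⊆ T)
    (hmarried : ∀ c ∈ B \ A, ∀ x ∉ T, ∀ y ∉ T, E x c → E y c → x = y ∨ Adj E x y) (ha : a ∈ A)
    (h : MoralThenDirected E A S T a v) (hvw : MoralAdj E B T v w) :
    MoralThenDirected E A S T a w := by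
  obtain ⟨hv, hw, c, hc, hvc, hwc⟩ := hvw
  by_cases hcA : c ∈ A
  · exact h.of_mem hA hST hcA hv hw hvc hwc
  have hparent (hwv : E w v) : MoralThenDirected E A S T a w :=
    h.parent hA hB hST hmarried ha (hB.mem_of_reflGen hvc hc) hv hw hwv
  cases hvc with
  | refl =>
    cases hwc with
    | refl => exact h
    | single hwv => exact hparent hwv
  | single hvc =>
    cases hwc with
    | refl => exact h.tail hv hw hvc
    | single hwc =>
      rcases hmarried c ⟨hc, hcA⟩ v hv w hw hvc hwc with rfl | hvw | hwv
      · exact h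
      · exact h.tail hv hw hvw
      · exact hparent hwv

/- Marriages at the children outside `A` create no new edges, so a walk can leave `A` only along
directed edges and has to come back the same way. -/
theorem MoralAdj.reflTransGen_restrict (hA : Ancestral E A) (hB : Ancestral E B) (hST : S ⊆ T)
    (hmarried : ∀ c ∈ B \ A, ∀ x ∉ T, ∀ y ∉ T, E x c → E y c → x = y ∨ Adj E x y) (ha : a ∈ A)
    (hb : b ∈ A) (h : ReflTransGen (MoralAdj E B T) a b) :
    ReflTransGen (MoralAdj E A S) a b := by
  have hwalk (v : V) (hv : ReflTransGen (MoralAdj E B T) a v) :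
      MoralThenDirected E A S T a v := by
    induction hv with
    | refl => exact ⟨a, .refl, .refl⟩
    | tail _ hvw ih => exact ih.moralAdj hA hB hST hmarried ha hvw
  exact (hwalk b h).moral hA hST hb

lemma adj_of_common_child {X : Set V} (hE : Acyclic E) (hX : EdgeCond E X Xᶜ ⊆ adjEdges E X)
    (ha : a ∈ X) (hb : b ∈ X) (hab : a ≠ b) (hc : c ∈ ancestors E Xᶜ) (hac : E a c)
    (hbc : E b c) : Adj E a b := by
  refine adj_of_mk_mem_adjEdges
    (hX ((mk_mem_edgeCond_iff hE disjoint_compl_right ha hb hab).2 fun S hS => ?_))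
  have ⟨haS, hbS⟩ := notMem_union_of_subset_sdiff disjoint_compl_right ha hb hS
  exact .single ⟨haS, hbS, c, ancestors_mono (by grind) hc, .single hac, .single hbc⟩

theorem DSep.union_compl {X : Set V} (hE : Acyclic E) (hX : EdgeCond E X Xᶜ ⊆ adjEdges E X)
    (ha : a ∈ X) (hb : b ∈ X) (hab : a ≠ b) (hS : S ⊆ X \ {a, b}) (h : DSep E S a b) :
    DSep E (S ∪ Xᶜ) a b := by
  contrapose! h
  rw [not_dSep_union_iff_moralConn hE disjoint_compl_right ha hb hab hS] at h
  have haS : a ∉ S := fun h => (hS h).2 (by simp)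
  have hbS : b ∉ S := fun h => (hS h).2 (by simp)
  rw [not_dSep_iff_moralConn hE hab haS hbS]
  refine MoralAdj.reflTransGen_restrict ancestral_ancestors ancestral_ancestors
    Set.subset_union_left ?_ (subset_ancestors (by simp)) (subset_ancestors (by simp)) h
  rintro c ⟨⟨t, ht, hct⟩, hcA⟩ x hx y hy hxc hyc
  have hc : c ∈ ancestors E Xᶜ := by
    rcases ht with ht | ht | ht
    · exact (hcA ⟨t, .inl ht, hct⟩).elim
    · exact (hcA ⟨t, .inr ht, hct⟩).elim
    · exact ⟨t, ht, hct⟩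
  exact or_iff_not_imp_left.2 fun hxy =>
    adj_of_common_child hE hX (by grind) (by grind) hxy hc hxc hyc

/-- A directed path leads from `x` to `c` whose last vertex before `c` lies in `X`. It lies in `X`
entirely, apart from `c`, when `X` is ancestral. -/
def ReachesThrough (E : V → V → Prop) (X : Set V) (x c : V) : Prop :=
  ∃ p ∈ X, ReflTransGen E x p ∧ E p c

/-- Some vertex reaches both `c` and `d` through `X`: a confounder in `X` of `c` and `d`. -/
def CommonCause (E : V → V → Prop) (X : Set V) (c d : V) : Prop :=
  ∃ x, ReachesThrough E X x c ∧ ReachesThrough E X x d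

/-- A chain of vertices of `A`, each confounded with the next one by `X`. -/
def InducingChain (E : V → V → Prop) (X A : Set V) : V → V → Prop :=
  ReflTransGen fun c d => CommonCause E X c d ∧ d ∈ A

/-- A variant of the inducing paths of Verma and Pearl with latent vertices `X`: a chain of
ancestors of `a` or `b`, each confounded with the next one by `X`, leads from `a` or a child of `a`
to `b` or a child of `b`. -/
def InducingConn (E : V → V → Prop) (X : Set V) (a b : V) : Prop :=
  ∃ c d, ReflGen E a c ∧ ReflGen E b d ∧ c ∈ ancestors E {a, b} ∧
    InducingChain E X (ancestors E {a, b}) c d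

/-- Inducing connections outside `X` only join equal or adjacent vertices. -/
def InducingConnAdj (E : V → V → Prop) (X : Set V) : Prop :=
  ∀ ⦃u⦄, u ∉ X → ∀ ⦃v⦄, v ∉ X → InducingConn E X u v → u = v ∨ Adj E u v

section Inducing

variable {X : Set V} {d x y z z' : V}

lemma InducingChain.mono (hAB : A ⊆ B) (h : InducingChain E X A c d) : InducingChain E X B c d :=
  ReflTransGen.mono (fun _ _ => And.imp_right (@hAB _)) _ _ h

lemma ReachesThrough.of_reflGen (h : ReachesThrough E X c d) (hxc : ReflGen E x c) :
    ReachesThrough E X x d :=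
  h.imp fun _ ⟨hp, hcp, hpd⟩ => ⟨hp, hxc.to_reflTransGen.trans hcp, hpd⟩

lemma MoralAdj.of_reflTransGen (hX : Ancestral E X) (hB : Ancestral E B) (hXS : Disjoint X S)
    (hv : v ∈ X) (hvB : v ∈ B) (h : ReflTransGen E u v) : ReflTransGen (MoralAdj E B S) u v := by
  induction h using ReflTransGen.head_induction_on with
  | refl => exact .refl
  | head hxy hyv ih =>
    have hy := hX.mem_of_reflTransGen hyv hv
    have hyB := hB.mem_of_reflTransGen hyv hvB
    exact .head (.of_adj (hXS.notMem_of_mem_left (hX hxy hy)) (hXS.notMem_of_mem_left hy)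
      (hB hxy hyB) hyB (.inl hxy)) ih

/- The chain is followed by a walk in the moral graph that avoids the vertices of the chain
themselves: it visits their parents in `X` and the confounders, none of which is in `S`. -/
lemma InducingChain.reflTransGen_moralAdj (hX : Ancestral E X) (hB : Ancestral E B)
    (hXS : Disjoint X S) (ha : a ∉ S) (hac : ReflGen E a c) (hc : c ∈ B)
    (h : InducingChain E X B c d) :
    d ∈ B ∧ ∃ u ∉ S, ReflGen E u d ∧ ReflTransGen (MoralAdj E B S) a u := by
  induction h with
  | refl => exact ⟨hc, a, ha, hac, .refl⟩
  | tail _ hcommon ih =>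
    obtain ⟨hcB, u, hu, huc, hau⟩ := ih
    obtain ⟨⟨x, ⟨p, hp, hxp, hpc⟩, ⟨q, hq, hxq, hqd⟩⟩, hdB⟩ := hcommon
    have hup : MoralAdj E B S u p := ⟨hu, hXS.notMem_of_mem_left hp, _, hcB, huc, .single hpc⟩
    have hpx := MoralAdj.reflTransGen_symm (MoralAdj.of_reflTransGen hX hB hXS hp (hB hpc hcB) hxp)
    have hxq := MoralAdj.of_reflTransGen hX hB hXS hq (hB hqd hdB) hxq
    exact ⟨hdB, q, hXS.notMem_of_mem_left hq, .single hqd, (hau.tail hup).trans (hpx.trans hxq)⟩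

lemma InducingConn.moralConn (hX : Ancestral E X) (hXS : Disjoint X S) (ha : a ∉ S) (hb : b ∉ S)
    (h : InducingConn E X a b) : MoralConn E S a b := by
  obtain ⟨c, d, hac, hbd, hc, hchain⟩ := h
  have hsub : ancestors E {a, b} ⊆ ancestors E ({a, b} ∪ S) := ancestors_mono Set.subset_union_left
  obtain ⟨hd, u, hu, hud, hau⟩ := InducingChain.reflTransGen_moralAdj hX ancestral_ancestors hXS ha
    hac (hsub hc) (hchain.mono hsub)
  exact hau.tail ⟨hu, hb, d, hd, hud, hbd⟩

lemma inducingConnAdj_of_edgePlain_subset (hE : Acyclic E) (hX : Ancestral E X)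
    (hplain : EdgePlain E Xᶜ ⊆ adjEdges E Xᶜ) : InducingConnAdj E X := by
  intro u hu v hv h
  refine or_iff_not_imp_left.2 fun huv => adj_of_mk_mem_adjEdges
    (hplain ((mk_mem_edgePlain_iff hE hu hv huv).2 fun S hS => ?_))
  exact h.moralConn hX (Set.disjoint_left.2 fun x hx hxS => (hS hxS).1 hx)
    (fun h => (hS h).2 (by simp)) (fun h => (hS h).2 (by simp))

/- Anchored at `z`, the chain is an inducing connection of `z` and `c`. Should the resulting edge be
`z → c`, the chain is also an inducing connection of `y` and `c`. -/
lemma InducingConnAdj.reflGen_or_edge (hind : InducingConnAdj E X) (hE : Acyclic E)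
    (hX : Ancestral E X) (hy : y ∉ X) (hc : c ∉ X) (hyz : ReflGen E y z)
    (hchain : InducingChain E X (ancestors E {z}) z z') (hcommon : CommonCause E X z' c) :
    ReflGen E c z ∨ E y c := by
  have hz : z ∉ X := fun hz => hy (hX.mem_of_reflGen hyz hz)
  have hextend {T : Set V} (hzT : z ∈ ancestors E T) (hcT : c ∈ T) :
      InducingChain E X (ancestors E T) z c :=
    (hchain.mono (ancestral_ancestors.ancestors_subset (by simpa using hzT))).tail
      ⟨hcommon, subset_ancestors hcT⟩
  have hzc : InducingConn E X z c := ⟨z, c, .refl, .refl, subset_ancestors (by simp),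
    hextend (subset_ancestors (by simp)) (by simp)⟩
  rcases hind hz hc hzc with rfl | hzc | hcz
  · exact .inl .refl
  · cases hyz with
    | refl => exact .inr hzc
    | single hyz =>
      have hzyc : z ∈ ancestors E {y, c} := ⟨c, by simp, .single hzc⟩
      have hyc : InducingConn E X y c := ⟨z, c, .single hyz, .refl, hzyc, hextend hzyc (by simp)⟩
      rcases hind hy hc hyc with rfl | hyc | hcy
      · exact .inl (.single hyz)
      · exact .inr hyc
      · exact (hE.not_reflTransGen hcy (.head hyz (.single hzc))).elim
  · exact .inl (.single hcz)

lemma InducingConnAdj.exists_common_family (hind : InducingConnAdj E X) (hE : Acyclic E)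
    (hX : Ancestral E X) (hy : y ∉ X) (hc : c ∉ X) (hw : w ∉ X) (hyz : ReflGen E y z)
    (hwc : ReflGen E w c) (hchain : InducingChain E X (ancestors E {z}) z z')
    (hcommon : CommonCause E X z' c) (hzB : z ∈ B) (hcB : c ∈ B) :
    ∃ d ∈ B, ReflGen E y d ∧ ReflGen E w d := by
  have hz : z ∉ X := fun hz => hy (hX.mem_of_reflGen hyz hz)
  rcases hind.reflGen_or_edge hE hX hy hc hyz hchain hcommon with hcz | hyc
  · refine ⟨z, hzB, hyz, ?_⟩
    cases hwc with
    | refl => exact hcz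
    | single hwc =>
      cases hcz with
      | refl => exact .single hwc
      | single hcz =>
        have hzw : InducingConn E X z w := ⟨z, c, .refl, .single hwc, subset_ancestors (by simp),
          (hchain.mono (ancestors_mono (by simp))).tail ⟨hcommon, z, by simp, .single hcz⟩⟩
        rcases hind hz hw hzw with rfl | hzw | hwz
        · exact .refl
        · exact (hE.not_reflTransGen hzw (.head hwc (.single hcz))).elim
        · exact .single hwz
  · exact ⟨c, hcB, .single hyc, hwc⟩

lemma ReachesThrough.exists_of_reflTransGen (hc : c ∈ X) (hd : d ∉ X) (h : ReflTransGen E c d) :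
    ∃ z ∉ X, ReachesThrough E X c z ∧ ReflTransGen E z d := by
  induction h using ReflTransGen.head_induction_on with
  | refl => exact (hd hc).elim
  | @head c p hcp hpd ih =>
    by_cases hp : p ∈ X
    · obtain ⟨z, hz, hpz, hzd⟩ := ih hp
      exact ⟨z, hz, hpz.of_reflGen (.single hcp), hzd⟩
    · exact ⟨p, hp, ⟨c, hc, .refl, hcp⟩, hpd⟩

/- A family inside `X` is represented by the first vertex outside `X` on the way to `T`. -/
lemma exists_notMem_ancestors (hX : Ancestral E X) (hXT : Disjoint X T) (hc : c ∈ ancestors E T) :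
    ∃ z ∉ X, z ∈ ancestors E T ∧ (∀ v ∈ X, ReflGen E v c → ReachesThrough E X v z) ∧
      ∀ w ∉ X, ReflGen E w c → ReflGen E w z := by
  by_cases hcX : c ∈ X
  · obtain ⟨t, ht, hct⟩ := hc
    obtain ⟨z, hz, hcz, hzt⟩ :=
      ReachesThrough.exists_of_reflTransGen hcX (hXT.notMem_of_mem_right ht) hct
    exact ⟨z, hz, ⟨t, ht, hzt⟩, fun v _ hvc => hcz.of_reflGen hvc,
      fun w hw hwc => (hw (hX.mem_of_reflGen hwc hcX)).elim⟩
  · refine ⟨c, hcX, hc, fun v hv hvc => ?_, fun _ _ h => h⟩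
    cases hvc with
    | refl => exact (hcX hv).elim
    | single hvc => exact ⟨v, hv, .refl, hvc⟩

/-- State of a moral walk from `a` that has entered `X` and is now at `v ∈ X`: it left the
complement of `X` at `y`, and an inducing chain that starts in a child of `y` or at `y` itself ends
in a vertex reached from `v` through `X`. -/
def Detour (E : V → V → Prop) (X B S : Set V) (a v : V) : Prop :=
  ∃ y ∉ X, ∃ z ∈ B, ∃ z', ReflTransGen (MoralAdj E B (S ∪ X)) a y ∧ y ∉ S ∧ ReflGen E y z ∧
    InducingChain E X (ancestors E {z}) z z' ∧ ReachesThrough E X v z'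

lemma Detour.extend (hind : InducingConnAdj E X) (hE : Acyclic E) (hX : Ancestral E X)
    (h : Detour E X B S a v) (hz : z ∉ X) (hzB : z ∈ B) (hvz : ReachesThrough E X v z)
    (hwz : ReachesThrough E X w z) : Detour E X B S a w := by
  obtain ⟨y, hy, z₁, hz₁B, z', hay, hyS, hyz₁, hchain, hvz'⟩ := h
  have hcommon : CommonCause E X z' z := ⟨v, hvz', hvz⟩
  rcases hind.reflGen_or_edge hE hX hy hz hyz₁ hchain hcommon with hzz₁ | hyz
  · exact ⟨y, hy, z₁, hz₁B, z, hay, hyS, hyz₁,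
      hchain.tail ⟨hcommon, z₁, rfl, hzz₁.to_reflTransGen⟩, hwz⟩
  · exact ⟨y, hy, z, hzB, z, hay, hyS, .single hyz, .refl, hwz⟩

lemma Detour.leave (hind : InducingConnAdj E X) (hE : Acyclic E) (hX : Ancestral E X)
    (h : Detour E X B S a v) (hz : z ∉ X) (hzB : z ∈ B) (hvz : ReachesThrough E X v z)
    (hw : w ∉ X) (hwS : w ∉ S) (hwz : ReflGen E w z) :
    ReflTransGen (MoralAdj E B (S ∪ X)) a w := by
  obtain ⟨y, hy, z₁, hz₁B, z', hay, hyS, hyz₁, hchain, hvz'⟩ := h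
  obtain ⟨d, hdB, hyd, hwd⟩ := hind.exists_common_family hE hX hy hz hw hyz₁ hwz hchain
    ⟨v, hvz', hvz⟩ hz₁B hzB
  exact hay.tail ⟨by simp [hyS, hy], by simp [hwS, hw], d, hdB, hyd, hwd⟩

/- Each excursion of the walk into `X` is replaced by one step between the vertices where it leaves
and re-enters the complement of `X`. -/
theorem MoralAdj.reflTransGen_union (hind : InducingConnAdj E X) (hE : Acyclic E)
    (hX : Ancestral E X) (hXT : Disjoint X T) (ha : a ∉ X) (hb : b ∉ X)
    (h : ReflTransGen (MoralAdj E (ancestors E T) S) a b) :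
    ReflTransGen (MoralAdj E (ancestors E T) (S ∪ X)) a b := by
  suffices hwalk : ∀ v, ReflTransGen (MoralAdj E (ancestors E T) S) a v →
      (v ∉ X → ReflTransGen (MoralAdj E (ancestors E T) (S ∪ X)) a v) ∧
      (v ∈ X → Detour E X (ancestors E T) S a v) from (hwalk b h).1 hb
  intro v hv
  induction hv with
  | refl => exact ⟨fun _ => .refl, fun h => (ha h).elim⟩
  | @tail v w _ hvw ih =>
    obtain ⟨hvS, hwS, c, hc, hvc, hwc⟩ := hvw
    obtain ⟨z, hz, hzB, hthrough, hfamily⟩ := exists_notMem_ancestors hX hXT hc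
    by_cases hv : v ∈ X
    · have hdetour := ih.2 hv
      have hvz := hthrough v hv hvc
      exact ⟨fun hw => hdetour.leave hind hE hX hz hzB hvz hw hwS (hfamily w hw hwc),
        fun hw => hdetour.extend hind hE hX hz hzB hvz (hthrough w hw hwc)⟩
    · have hav := ih.1 hv
      exact ⟨fun hw => hav.tail ⟨by simp [hvS, hv], by simp [hwS, hw], c, hc, hvc, hwc⟩,
        fun hw => ⟨v, hv, z, hzB, z, hav, hvS, hfamily v hv hvc, .refl, hthrough w hw hwc⟩⟩

theorem DSep.of_union (hE : Acyclic E) (hX : Ancestral E X)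
    (hplain : EdgePlain E Xᶜ ⊆ adjEdges E Xᶜ) (ha : a ∈ Xᶜ) (hb : b ∈ Xᶜ) (hab : a ≠ b)
    (hS : S ⊆ Xᶜ \ {a, b}) (h : DSep E (S ∪ X) a b) : DSep E S a b := by
  contrapose! h
  have haS : a ∉ S := fun h => (hS h).2 (by simp)
  have hbS : b ∉ S := fun h => (hS h).2 (by simp)
  rw [not_dSep_iff_moralConn hE hab haS hbS] at h
  rw [not_dSep_union_iff_moralConn hE disjoint_compl_left ha hb hab hS]
  have hXT : Disjoint X ({a, b} ∪ S) := Set.disjoint_left.2 (by grind)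
  have hind := inducingConnAdj_of_edgePlain_subset hE hX hplain
  exact ReflTransGen.mono (fun _ _ => MoralAdj.mono (ancestors_mono (by grind))) _ _
    (MoralAdj.reflTransGen_union hind hE hX hXT ha hb h)

end Inducing

section Density

variable {W : Set V} {F F' : Set (Sym2 V)}

lemma edgeDens_eq_div_choose (F : Set (Sym2 V)) (W : Set V) :
    edgeDens F W = F.ncard / (W.ncard.choose 2 : ℝ) := by
  rw [edgeDens, Nat.cast_choose_two]

lemma edgeDens_mono (h : F ⊆ F') (hfin : F'.Finite) : edgeDens F W ≤ edgeDens F' W := by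
  simp only [edgeDens_eq_div_choose]
  gcongr

lemma edgeDens_lt_edgeDens (hW : 1 < W.ncard) (h : F ⊂ F') (hfin : F'.Finite) :
    edgeDens F W < edgeDens F' W := by
  have hchoose : 0 < W.ncard.choose 2 := Nat.choose_pos hW
  simp only [edgeDens_eq_div_choose]
  gcongr
  exact Set.ncard_lt_ncard h hfin

end Density

end

/-- Theorem 2, combined edge-density criterion: if the graphical form of
(C1) or of (C2) holds, then `d(X|Y) − d(Y|X) > 0`, so the causal direction can be
inferred from the sign of this quantity. -/
theorem stmt_16 {V : Type*} [Fintype V] (E : V → V → Prop) (Xs Ys : Set V)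
    (hcover : Xs ∪ Ys = Set.univ) (hdisj : Disjoint Xs Ys)
    (hXne : Xs.Nonempty) (hYne : Ys.Nonempty)
    (hirr : Irreflexive E) (hacyc : Acyclic E)
    (huni : Unidirectional E Xs Ys)
    (hC : (∃ Xi Xj : V, Xi ∈ Xs ∧ Xj ∈ Xs ∧ Xi ≠ Xj ∧ ∃ S ⊆ Xs \ {Xi, Xj},
            DSep E S Xi Xj ∧ ¬ DSep E (S ∪ Ys) Xi Xj) ∨
          (∃ Yk Yl : V, Yk ∈ Ys ∧ Yl ∈ Ys ∧ Yk ≠ Yl ∧ ∃ S ⊆ Ys \ {Yk, Yl},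
            ¬ DSep E S Yk Yl ∧ DSep E (S ∪ Xs) Yk Yl)) :
    0 < (edgeDens (EdgeCond E Xs Ys) Xs - edgeDens (EdgePlain E Xs) Xs) -
        (edgeDens (EdgeCond E Ys Xs) Ys - edgeDens (EdgePlain E Ys) Ys) := by
  obtain rfl : Xsᶜ = Ys := IsCompl.compl_eq ⟨hdisj, codisjoint_iff.2 hcover⟩
  have hX : Ancestral E Xs := fun u v huv hv => by_contra fun hu => huni v hv u hu huv
  rw [hX.edgePlain_eq hacyc, hX.edgeCond_compl_eq hacyc]
  have hdensX : edgeDens (adjEdges E Xs) Xs ≤ edgeDens (EdgeCond E Xs Xsᶜ) Xs :=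
    edgeDens_mono adjEdges_subset_edgeCond (Set.toFinite _)
  have hdensY : edgeDens (adjEdges E Xsᶜ) Xsᶜ ≤ edgeDens (EdgePlain E Xsᶜ) Xsᶜ :=
    edgeDens_mono adjEdges_subset_edgePlain (Set.toFinite _)
  rcases hC with ⟨i, j, hi, hj, hij, S, hS, hsep, hnsep⟩ | ⟨k, l, hk, hl, hkl, S, hS, hnsep, hsep⟩
  · have hstrict : adjEdges E Xs ⊂ EdgeCond E Xs Xsᶜ :=
      ⟨adjEdges_subset_edgeCond, fun h => hnsep (hsep.union_compl hacyc h hi hj hij hS)⟩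
    have hcard : 1 < Xs.ncard := (Set.one_lt_ncard (Set.toFinite _)).2 ⟨i, hi, j, hj, hij⟩
    linarith [edgeDens_lt_edgeDens hcard hstrict (Set.toFinite _)]
  · have hstrict : adjEdges E Xsᶜ ⊂ EdgePlain E Xsᶜ :=
      ⟨adjEdges_subset_edgePlain, fun h => hnsep (hsep.of_union hacyc hX h hk hl hkl hS)⟩
    have hcard : 1 < Xsᶜ.ncard := (Set.one_lt_ncard (Set.toFinite _)).2 ⟨k, hk, l, hl, hkl⟩
    linarith [edgeDens_lt_edgeDens hcard hstrict (Set.toFinite _)]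

end VecCI
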